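/- Let n ≥ 1 be a natural number, let θ2 > θ1 > 0 and A1 > 0 be real numbers, and let T be a natural number. Let s, d : ℕ → (Fin n → ℝ^d) satisfy: (i) ‖s_i(T)‖ ≤ exp(θ2·T) for all i; (ii) for every k ≥ T there is an n×n column stochastic matrix C(k) and vectors g_i(k) with ‖g_i(k)‖ ≤ A1·exp(θ1·k) such that d_i(k+1) = Σ_{j=1}^n C(k)_{ij}·s_j(k) + g_i(k) for all i; and (iii) ‖s_i(k)‖ ≤ ‖d_i(k)‖ for all i and all k > T. Define A = 2·n·A1/(exp(θ1) − 1). Then for every natural number k with k > max{ T + log(2n)/θ2 , log(A)/(θ2 − θ1) }, it holds that Σ_{i=1}^n ‖d_i(k)‖ < exp(θ2·k); in particular ‖d_i(k)‖ < exp(θ2·k) for every i, so the projection onto the ball {s ∈ ℝ^d : ‖s‖ ≤ exp(θ2·k)} leaves d_i(k) unchanged. -/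

import Mathlib

/-!
Write `D k = ∑ i, ‖dv k i‖` and `S k = ∑ i, ‖s k i‖`. A column stochastic matrix does not increase
the sum of the norms of a family of vectors, so `D (k + 1) ≤ S k + n * A₁ * exp (θ₁ * k)`
(`sum_norm_mix_le`), while `S k ≤ D k` for `k > T` by the projection hypothesis. Summing the
geometric series of perturbations gives `D k ≤ n * exp (θ₂ * T) + B * exp (θ₁ * k)` for `k > T`,
where `B * (exp θ₁ - 1) = n * A₁`. The two lower bounds on `k` are exactly what makes each of the
two terms smaller than `exp (θ₂ * k) / 2`.
-/

/-- A column stochastic matrix acting on a family of vectors does not increase the sum of the norms;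
perturbing each of the `n` new vectors by at most `b` adds at most `n * b`. -/
theorem sum_norm_mix_le {E : Type*} [NormedAddCommGroup E] [NormedSpace ℝ E] {n : ℕ}
    (C : Matrix (Fin n) (Fin n) ℝ) (hC : ∀ i j, 0 ≤ C i j) (hC1 : ∀ j, ∑ i, C i j = 1)
    (s g : Fin n → E) (b : ℝ) (hg : ∀ i, ‖g i‖ ≤ b) :
    ∑ i, ‖(∑ j, C i j • s j) + g i‖ ≤ (∑ j, ‖s j‖) + n * b := by
  have h1 : ∀ i, ‖(∑ j, C i j • s j) + g i‖ ≤ (∑ j, C i j * ‖s j‖) + b := by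
    intro i
    refine (norm_add_le _ _).trans (add_le_add ((norm_sum_le _ _).trans ?_) (hg i))
    refine Finset.sum_le_sum fun j _ => ?_
    rw [norm_smul, Real.norm_of_nonneg (hC i j)]
  calc ∑ i, ‖(∑ j, C i j • s j) + g i‖
      ≤ ∑ i, ((∑ j, C i j * ‖s j‖) + b) := Finset.sum_le_sum fun i _ => h1 i
    _ = (∑ j, ‖s j‖) + n * b := by
      rw [Finset.sum_add_distrib, Finset.sum_comm]
      simp [← Finset.sum_mul, hC1]


/-- With exponentially growing projection sets, after time
`max{T + log(2n)/θ₂, log(A)/(θ₂−θ₁)}` the candidate gradient-tracking updates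
lie strictly inside the ball of radius `exp(θ₂·k)`, so projection onto that
ball is the identity. -/
theorem rp3_projection_identity_unbounded (n d : ℕ) (hn : 1 ≤ n)
    (θ₁ θ₂ A₁ : ℝ) (hθ₁ : 0 < θ₁) (hθ : θ₁ < θ₂) (hA₁ : 0 < A₁)
    (T : ℕ)
    (s dv : ℕ → Fin n → EuclideanSpace ℝ (Fin d))
    (hsT : ∀ i, ‖s T i‖ ≤ Real.exp (θ₂ * T))
    (hrec : ∀ k, T ≤ k → ∃ C : Matrix (Fin n) (Fin n) ℝ,
      (∀ i j, 0 ≤ C i j) ∧ (∀ j, ∑ i, C i j = 1) ∧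
      ∃ g : Fin n → EuclideanSpace ℝ (Fin d),
        (∀ i, ‖g i‖ ≤ A₁ * Real.exp (θ₁ * k)) ∧
        (∀ i, dv (k + 1) i = (∑ j, C i j • s k j) + g i))
    (hproj : ∀ k, T < k → ∀ i, ‖s k i‖ ≤ ‖dv k i‖) :
    ∀ k : ℕ,
      (k : ℝ) > max ((T : ℝ) + Real.log (2 * n) / θ₂)
        (Real.log (2 * n * A₁ / (Real.exp θ₁ - 1)) / (θ₂ - θ₁)) →
      (∑ i, ‖dv k i‖ < Real.exp (θ₂ * k)) ∧
      (∀ i, ‖dv k i‖ < Real.exp (θ₂ * k)) ∧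
      (∀ i, dv k i ∈
        Metric.closedBall (0 : EuclideanSpace ℝ (Fin d)) (Real.exp (θ₂ * k))) := by
  have hE : 0 < Real.exp θ₁ - 1 := by
    have := Real.add_one_lt_exp hθ₁.ne'
    linarith
  have hn1 : (1 : ℝ) ≤ n := by exact_mod_cast hn
  have hθ₂ : 0 < θ₂ := hθ₁.trans hθ
  -- The value of `B` that makes the bound `U + B * exp (θ₁ * k)` below reproduce itself.
  obtain ⟨B, hB⟩ : ∃ B, B = n * A₁ / (Real.exp θ₁ - 1) := ⟨_, rfl⟩
  have hBpos : 0 < B := by rw [hB]; positivity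
  have hBE : B * (Real.exp θ₁ - 1) = n * A₁ := by
    rw [hB]; field_simp
  have hstep : ∀ k, T ≤ k →
      ∑ i, ‖s k i‖ ≤ n * Real.exp (θ₂ * T) + B * Real.exp (θ₁ * k) →
      ∑ i, ‖dv (k + 1) i‖ ≤ n * Real.exp (θ₂ * T) + B * Real.exp (θ₁ * (k + 1 : ℕ)) := by
    intro k hk hS
    obtain ⟨C, hC, hC1, g, hg, hd⟩ := hrec k hk
    have h := sum_norm_mix_le C hC hC1 (s k) g _ hg
    simp only [← hd] at h
    have he : Real.exp (θ₁ * (k + 1 : ℕ)) = Real.exp (θ₁ * k) * Real.exp θ₁ := by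
      rw [← Real.exp_add]; push_cast; ring_nf
    rw [he]
    linear_combination h + hS - Real.exp (θ₁ * k) * hBE
  have hS : ∀ k, T ≤ k →
      ∑ i, ‖s k i‖ ≤ n * Real.exp (θ₂ * T) + B * Real.exp (θ₁ * k) := by
    intro k hk
    induction k, hk using Nat.le_induction with
    | base =>
      have h : ∑ i, ‖s T i‖ ≤ ∑ _i : Fin n, Real.exp (θ₂ * T) :=
        Finset.sum_le_sum fun i _ => hsT i
      rw [Finset.sum_const, Finset.card_univ, Fintype.card_fin, nsmul_eq_mul] at h
      have : 0 < B * Real.exp (θ₁ * T) := by positivity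
      linarith
    | succ k hk ih =>
      exact (Finset.sum_le_sum fun i _ => hproj (k + 1) (by omega) i).trans (hstep k hk ih)
  intro k hk
  obtain ⟨hk1, hk2⟩ := max_lt_iff.mp hk
  have hTk : T < k := by
    have h0 : 0 ≤ Real.log (2 * n) / θ₂ :=
      div_nonneg (Real.log_nonneg (by linarith)) hθ₂.le
    have : (T : ℝ) < k := by linarith
    exact_mod_cast this
  have hterm1 : 2 * n * Real.exp (θ₂ * T) < Real.exp (θ₂ * k) := by
    have h : Real.log (2 * n) < (k - T) * θ₂ := (div_lt_iff₀ hθ₂).mp (by linarith)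
    rw [Real.log_lt_iff_lt_exp (by linarith)] at h
    calc 2 * n * Real.exp (θ₂ * T) < Real.exp ((k - T) * θ₂) * Real.exp (θ₂ * T) := by gcongr
      _ = Real.exp (θ₂ * k) := by rw [← Real.exp_add]; ring_nf
  have hterm2 : 2 * B * Real.exp (θ₁ * k) < Real.exp (θ₂ * k) := by
    have h : Real.log (2 * n * A₁ / (Real.exp θ₁ - 1)) < k * (θ₂ - θ₁) :=
      (div_lt_iff₀ (sub_pos.mpr hθ)).mp hk2
    have hA : 2 * n * A₁ / (Real.exp θ₁ - 1) = 2 * B := by rw [hB]; ring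
    rw [hA, Real.log_lt_iff_lt_exp (by linarith)] at h
    calc 2 * B * Real.exp (θ₁ * k) < Real.exp (k * (θ₂ - θ₁)) * Real.exp (θ₁ * k) := by gcongr
      _ = Real.exp (θ₂ * k) := by rw [← Real.exp_add]; ring_nf
  have hsum : ∑ i, ‖dv k i‖ < Real.exp (θ₂ * k) := by
    obtain ⟨m, rfl⟩ : ∃ m, k = m + 1 := ⟨k - 1, by omega⟩
    have h := hstep m (by omega) (hS m (by omega))
    linarith
  have hi : ∀ i, ‖dv k i‖ < Real.exp (θ₂ * k) := fun i =>
    (Finset.single_le_sum (f := fun i => ‖dv k i‖) (fun _ _ => norm_nonneg _)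
      (Finset.mem_univ i)).trans_lt hsum
  exact ⟨hsum, hi, fun i => mem_closedBall_zero_iff.mpr (hi i).le⟩
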